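/- Let K, L be star bodies in ℝⁿ and p ≥ 1. Define the L_p harmonic radial sum K ⊕_p L by ρ(K⊕_pL, u)^{-p} = ρ(K,u)^{-p} + ρ(L,u)^{-p} for all u ∈ S^{n-1}. Then V(K⊕_pL)^{-p/n} ≥ V(K)^{-p/n} + V(L)^{-p/n}, with equality if and only if K and L are dilates. -/

import Mathlib

open MeasureTheory Metric Real

/-- The surface (spherical) measure on the unit sphere `S^{n-1} ⊆ ℝⁿ`. -/
noncomputable def sphereσ (n : ℕ) : Measure (sphere (0 : EuclideanSpace ℝ (Fin n)) 1) :=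
  μH[(n : ℝ) - 1]

/-!
With `q = n` and `r = -p / n < 0`, the functions `f = ρK ^ q / q`, `g = ρL ^ q / q` and
`h = ρS ^ q / q` satisfy `h ^ r = f ^ r + g ^ r`, and the claim is the reverse Minkowski inequality
`(∫ f) ^ r + (∫ g) ^ r ≤ (∫ h) ^ r`. Let `F = ∫ f`, `G = ∫ g`, `C ^ r = F ^ r + G ^ r` and use the
weights `a = (F / C) ^ r`, `b = (G / C) ^ r`, whose sum is `1`. Pointwise
`(h / C) ^ r = a * (f / F) ^ r + b * (g / G) ^ r`, so strict convexity of `x ↦ x ^ r` gives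
`h / C ≤ a * (f / F) + b * (g / G)`, with equality exactly where `f / F = g / G`. Integrating,
`∫ h ≤ C`, with equality iff `f / F = g / G` almost everywhere. By continuity this holds everywhere,
because stereographic projection, being locally bi-Lipschitz, shows that the surface measure is
finite and charges every nonempty open set.
-/

open Filter Module
open scoped NNReal Topology

section NegativePowers

variable {r a b x y z : ℝ}

lemma strictConvexOn_rpow_of_neg (hr : r < 0) :
    StrictConvexOn ℝ (Set.Ioi 0) fun x : ℝ ↦ x ^ r := by
  refine ⟨convex_Ioi 0, fun x hx y hy hxy a b ha hb hab ↦ ?_⟩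
  have hlog := strictConcaveOn_log_Ioi.2 hx hy hxy ha hb hab
  have hexp := convexOn_exp.2 (Set.mem_univ (log x * r)) (Set.mem_univ (log y * r)) ha.le hb.le hab
  have hmem : 0 < a • x + b • y := (convex_Ioi (0 : ℝ)) hx hy ha.le hb.le hab
  simp only [rpow_def_of_pos hx, rpow_def_of_pos hy, rpow_def_of_pos hmem]
  refine (exp_lt_exp.2 ?_).trans_le hexp
  simp only [smul_eq_mul] at hlog ⊢
  nlinarith

lemma le_weighted_add_and_eq_iff_of_rpow_eq (hr : r < 0) (ha : 0 < a) (hb : 0 < b)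
    (hab : a + b = 1) (hx : 0 < x) (hy : 0 < y) (hz : 0 < z)
    (h : z ^ r = a * x ^ r + b * y ^ r) :
    z ≤ a * x + b * y ∧ (z = a * x + b * y ↔ x = y) := by
  rcases eq_or_ne x y with rfl | hxy
  · have hzx : z = x := by
      rwa [← add_mul, hab, one_mul, rpow_left_inj hz.le hx.le hr.ne] at h
    simp [← add_mul, hab, hzx]
  · have hlt : z < a * x + b * y := by
      rw [← rpow_lt_rpow_iff_of_neg (by positivity) hz hr, h]
      exact (strictConvexOn_rpow_of_neg hr).2 hx hy hxy ha hb hab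
    exact ⟨hlt.le, iff_of_false hlt.ne hxy⟩

lemma div_rpow_eq_weighted_add {A B C : ℝ} (hx : 0 ≤ x) (hy : 0 ≤ y) (hz : 0 ≤ z) (hA : 0 < A)
    (hB : 0 < B) (hC : 0 ≤ C) (h : z ^ r = x ^ r + y ^ r) :
    (z / C) ^ r = (A / C) ^ r * (x / A) ^ r + (B / C) ^ r * (y / B) ^ r := by
  rw [← mul_rpow (by positivity) (by positivity), ← mul_rpow (by positivity) (by positivity),
    div_mul_div_cancel₀' hA.ne', div_mul_div_cancel₀' hB.ne', div_rpow hx hC, div_rpow hy hC,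
    div_rpow hz hC, h, add_div]

lemma exists_pos_rpow_eq (hr : r ≠ 0) (hx : 0 < x) : ∃ c : ℝ, 0 < c ∧ c ^ r = x :=
  ⟨x ^ r⁻¹, by positivity, rpow_inv_rpow hx.le hr⟩

lemma exists_pos_forall_rpow_eq_mul_iff {X : Type*} {f g : X → ℝ} (hr : r ≠ 0)
    (hf : ∀ u, 0 ≤ f u) (hg : ∀ u, 0 ≤ g u) :
    (∃ c : ℝ, 0 < c ∧ ∀ u, f u ^ r = c * g u ^ r) ↔ ∃ c : ℝ, 0 < c ∧ ∀ u, f u = c * g u := by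
  constructor
  · rintro ⟨c, hc, h⟩
    obtain ⟨d, hd, rfl⟩ := exists_pos_rpow_eq hr hc
    refine ⟨d, hd, fun u ↦ ?_⟩
    rw [← rpow_left_inj (hf u) (mul_nonneg hd.le (hg u)) hr, h u, mul_rpow hd.le (hg u)]
  · rintro ⟨c, hc, h⟩
    exact ⟨c ^ r, by positivity, fun u ↦ by rw [h u, mul_rpow hc.le (hg u)]⟩

end NegativePowers

section ReverseMinkowski

variable {Ω : Type*} [MeasurableSpace Ω] {μ : Measure Ω} {f g h : Ω → ℝ} {r : ℝ}

lemma integral_pos_of_ae_pos [NeZero μ] (hf : Integrable f μ) (hpos : ∀ᵐ x ∂μ, 0 < f x) :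
    0 < ∫ x, f x ∂μ := by
  have hnonneg : 0 ≤ᵐ[μ] f := hpos.mono fun _ hx ↦ hx.le
  refine (integral_nonneg_of_ae hnonneg).lt_of_ne' fun hzero ↦ ?_
  obtain ⟨x, hx, hx'⟩ :=
    (hpos.and ((integral_eq_zero_iff_of_nonneg_ae hnonneg hf).1 hzero)).exists
  exact hx.ne' hx'

lemma integrable_of_rpow_eq_rpow_add_rpow (hr : r < 0) (hf : Integrable f μ)
    (hg : AEMeasurable g μ) (hfpos : ∀ᵐ x ∂μ, 0 < f x) (hgpos : ∀ᵐ x ∂μ, 0 < g x)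
    (hhpos : ∀ᵐ x ∂μ, 0 < h x) (hsum : ∀ᵐ x ∂μ, h x ^ r = f x ^ r + g x ^ r) :
    Integrable h μ := by
  have heq : (fun x ↦ (f x ^ r + g x ^ r) ^ r⁻¹) =ᵐ[μ] h := by
    filter_upwards [hhpos, hsum] with x hx hxsum
    rw [← hxsum, rpow_rpow_inv hx.le hr.ne]
  have hmeas : AEMeasurable h μ :=
    (((hf.aemeasurable.pow_const r).add (hg.pow_const r)).pow_const r⁻¹).congr heq
  refine hf.mono' hmeas.aestronglyMeasurable ?_
  filter_upwards [hfpos, hgpos, hhpos, hsum] with x hfx hgx hhx hxsum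
  rw [norm_of_nonneg hhx.le, ← rpow_le_rpow_iff_of_neg hfx hhx hr, hxsum]
  exact le_add_of_nonneg_right (by positivity)

lemma integral_le_weighted_add_and_eq_iff_of_rpow_eq {a b : ℝ} (hr : r < 0) (ha : 0 < a)
    (hb : 0 < b) (hab : a + b = 1) (hf : Integrable f μ) (hg : Integrable g μ)
    (hh : Integrable h μ) (hfpos : ∀ᵐ x ∂μ, 0 < f x) (hgpos : ∀ᵐ x ∂μ, 0 < g x)
    (hhpos : ∀ᵐ x ∂μ, 0 < h x) (hsum : ∀ᵐ x ∂μ, h x ^ r = a * f x ^ r + b * g x ^ r) :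
    ∫ x, h x ∂μ ≤ a * ∫ x, f x ∂μ + b * ∫ x, g x ∂μ ∧
      (∫ x, h x ∂μ = a * ∫ x, f x ∂μ + b * ∫ x, g x ∂μ ↔ f =ᵐ[μ] g) := by
  have hmean : ∀ᵐ x ∂μ, h x ≤ a * f x + b * g x ∧ (h x = a * f x + b * g x ↔ f x = g x) := by
    filter_upwards [hfpos, hgpos, hhpos, hsum] with x hfx hgx hhx hxsum
    exact le_weighted_add_and_eq_iff_of_rpow_eq hr ha hb hab hfx hgx hhx hxsum
  have hfg : Integrable (fun x ↦ a * f x + b * g x) μ := (hf.const_mul a).add (hg.const_mul b)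
  have hle : h ≤ᵐ[μ] fun x ↦ a * f x + b * g x := hmean.mono fun _ hx ↦ hx.1
  rw [← integral_const_mul, ← integral_const_mul,
    ← integral_add (hf.const_mul a) (hg.const_mul b)]
  refine ⟨integral_mono_ae hh hfg hle, ?_⟩
  rw [integral_eq_iff_of_ae_le hh hfg hle]
  exact eventually_congr (hmean.mono fun _ hx ↦ hx.2)

lemma div_integral_ae_eq_div_integral_iff (hf : 0 < ∫ x, f x ∂μ) (hg : 0 < ∫ x, g x ∂μ) :
    ((fun x ↦ f x / ∫ y, f y ∂μ) =ᵐ[μ] fun x ↦ g x / ∫ y, g y ∂μ) ↔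
      ∃ c : ℝ, 0 < c ∧ ∀ᵐ x ∂μ, f x = c * g x := by
  constructor
  · intro h
    refine ⟨(∫ x, f x ∂μ) / ∫ x, g x ∂μ, div_pos hf hg, h.mono fun x hx ↦ ?_⟩
    rw [div_eq_iff hf.ne'] at hx
    rw [hx]
    ring
  · rintro ⟨c, hc, h⟩
    have hint : ∫ x, f x ∂μ = c * ∫ x, g x ∂μ := by
      rw [← integral_const_mul, integral_congr_ae h]
    filter_upwards [h] with x hx
    rw [hx, hint, mul_div_mul_left _ _ hc.ne']

theorem rpow_integral_add_rpow_integral_le_and_eq_iff [NeZero μ] (hr : r < 0)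
    (hf : Integrable f μ) (hg : Integrable g μ) (hfpos : ∀ᵐ x ∂μ, 0 < f x)
    (hgpos : ∀ᵐ x ∂μ, 0 < g x) (hhpos : ∀ᵐ x ∂μ, 0 < h x)
    (hsum : ∀ᵐ x ∂μ, h x ^ r = f x ^ r + g x ^ r) :
    (∫ x, f x ∂μ) ^ r + (∫ x, g x ∂μ) ^ r ≤ (∫ x, h x ∂μ) ^ r ∧
      ((∫ x, h x ∂μ) ^ r = (∫ x, f x ∂μ) ^ r + (∫ x, g x ∂μ) ^ r ↔
        ∃ c : ℝ, 0 < c ∧ ∀ᵐ x ∂μ, f x = c * g x) := by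
  have hh := integrable_of_rpow_eq_rpow_add_rpow hr hf hg.aemeasurable hfpos hgpos hhpos hsum
  have hF := integral_pos_of_ae_pos hf hfpos
  have hG := integral_pos_of_ae_pos hg hgpos
  have hH := integral_pos_of_ae_pos hh hhpos
  rw [← div_integral_ae_eq_div_integral_iff hF hG]
  set F := ∫ x, f x ∂μ
  set G := ∫ x, g x ∂μ
  obtain ⟨C, hC, hCr⟩ : ∃ C : ℝ, 0 < C ∧ C ^ r = F ^ r + G ^ r :=
    exists_pos_rpow_eq hr.ne (by positivity)
  have hweights : (F / C) ^ r + (G / C) ^ r = 1 := by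
    rw [div_rpow hF.le hC.le, div_rpow hG.le hC.le, ← add_div, ← hCr,
      div_self (rpow_pos_of_pos hC r).ne']
  have hnormalized : ∀ᵐ x ∂μ,
      (h x / C) ^ r = (F / C) ^ r * (f x / F) ^ r + (G / C) ^ r * (g x / G) ^ r := by
    filter_upwards [hfpos, hgpos, hhpos, hsum] with x hfx hgx hhx hxsum
    exact div_rpow_eq_weighted_add hfx.le hgx.le hhx.le hF hG hC.le hxsum
  obtain ⟨hle, heq⟩ := integral_le_weighted_add_and_eq_iff_of_rpow_eq hr
    (by positivity) (by positivity) hweights (hf.div_const F) (hg.div_const G) (hh.div_const C)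
    (hfpos.mono fun _ hx ↦ div_pos hx hF) (hgpos.mono fun _ hx ↦ div_pos hx hG)
    (hhpos.mono fun _ hx ↦ div_pos hx hC) hnormalized
  rw [integral_div, integral_div, integral_div, div_self hF.ne', div_self hG.ne', mul_one,
    mul_one, hweights] at hle heq
  rw [← hCr, rpow_le_rpow_iff_of_neg hC hH hr, rpow_left_inj hH.le hC.le hr.ne]
  exact ⟨(div_le_one hC).1 hle, (div_eq_one_iff_eq hC.ne').symm.trans heq⟩

end ReverseMinkowski

section DualVolume

variable {X : Type*} [MeasurableSpace X]

/-- The `q`-th dual volume of the star body with radial function `ρ`, with respect to a measure `μ`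
on the directions. For `q = n` and the surface measure of `S^{n-1}` it is the volume of the body in
`ℝⁿ`, written in polar coordinates. -/
noncomputable def dualVolume (μ : Measure X) (q : ℝ) (ρ : X → ℝ) : ℝ :=
  (1 / q) * ∫ u, ρ u ^ q ∂μ

theorem Lp_dual_brunn_minkowski_general [TopologicalSpace X] [CompactSpace X] [Nonempty X]
    [BorelSpace X] (μ : Measure X) [IsFiniteMeasure μ] [μ.IsOpenPosMeasure]
    {p q : ℝ} (hp : 0 < p) (hq : 0 < q) {ρK ρL ρS : X → ℝ} (hKc : Continuous ρK)
    (hLc : Continuous ρL) (hKpos : ∀ u, 0 < ρK u) (hLpos : ∀ u, 0 < ρL u)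
    (hSpos : ∀ u, 0 < ρS u) (hsum : ∀ u, ρS u ^ (-p) = ρK u ^ (-p) + ρL u ^ (-p)) :
    dualVolume μ q ρS ^ (-p / q) ≥ dualVolume μ q ρK ^ (-p / q) + dualVolume μ q ρL ^ (-p / q) ∧
      (dualVolume μ q ρS ^ (-p / q) =
          dualVolume μ q ρK ^ (-p / q) + dualVolume μ q ρL ^ (-p / q) ↔
        ∃ c : ℝ, 0 < c ∧ ∀ u, ρK u = c * ρL u) := by
  have hr : -p / q < 0 := div_neg_of_neg_of_pos (neg_neg_of_pos hp) hq
  have hcont {ρ : X → ℝ} (hρ : Continuous ρ) (hpos : ∀ u, 0 < ρ u) :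
      Continuous fun u ↦ 1 / q * ρ u ^ q :=
    continuous_const.mul (hρ.rpow_const fun u ↦ .inl (hpos u).ne')
  have hdensity_pos {ρ : X → ℝ} (hpos : ∀ u, 0 < ρ u) (u : X) : 0 < 1 / q * ρ u ^ q := by
    have := hpos u
    positivity
  have hdensity_rpow {ρ : X → ℝ} (hpos : ∀ u, 0 < ρ u) (u : X) :
      (1 / q * ρ u ^ q) ^ (-p / q) = (1 / q) ^ (-p / q) * ρ u ^ (-p) := by
    have := hpos u
    rw [mul_rpow (by positivity) (by positivity), ← rpow_mul this.le, mul_div_cancel₀ _ hq.ne']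
  have hintegrable {f : X → ℝ} (hf : Continuous f) : Integrable f μ :=
    hf.integrable_of_hasCompactSupport (.of_compactSpace f)
  have hminkowski := rpow_integral_add_rpow_integral_le_and_eq_iff (μ := μ) hr
    (hintegrable (hcont hKc hKpos)) (hintegrable (hcont hLc hLpos))
    (.of_forall (hdensity_pos hKpos)) (.of_forall (hdensity_pos hLpos))
    (.of_forall (hdensity_pos hSpos)) <| .of_forall fun u ↦ by
      rw [hdensity_rpow hKpos, hdensity_rpow hLpos, hdensity_rpow hSpos, hsum, mul_add]
  simp only [integral_const_mul] at hminkowski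
  refine ⟨hminkowski.1, hminkowski.2.trans ?_⟩
  rw [← exists_pos_forall_rpow_eq_mul_iff hq.ne' (fun u ↦ (hKpos u).le) fun u ↦ (hLpos u).le]
  refine exists_congr fun c ↦ and_congr_right fun _ ↦ ?_
  refine (Continuous.ae_eq_iff_eq μ (hcont hKc hKpos) ((hcont hLc hLpos).const_mul c)).trans ?_
  simp only [funext_iff, mul_left_comm c, mul_right_inj' (one_div_pos.2 hq).ne']

end DualVolume

section LocallyLipschitz

variable {X Y : Type*} [EMetricSpace X] [MeasurableSpace X] [BorelSpace X] [EMetricSpace Y]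
  [MeasurableSpace Y] [BorelSpace Y] {d : ℝ} {f : X → Y} {x : X}

lemma finiteAtFilter_hausdorffMeasure_of_lipschitzOnWith (hd : 0 ≤ d)
    (hf : ∃ K : ℝ≥0, ∃ t ∈ 𝓝 x, LipschitzOnWith K f t) (hopen : 𝓝 (f x) ≤ map f (𝓝 x))
    (hx : (μH[d] : Measure X).FiniteAtFilter (𝓝 x)) :
    (μH[d] : Measure Y).FiniteAtFilter (𝓝 (f x)) := by
  obtain ⟨K, t, ht, hK⟩ := hf
  obtain ⟨s, hs, hs_fin⟩ := hx
  refine ⟨f '' (t ∩ s), hopen (image_mem_map (inter_mem ht hs)), ?_⟩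
  refine ((hK.mono Set.inter_subset_left).hausdorffMeasure_image_le hd).trans_lt ?_
  exact ENNReal.mul_lt_top (ENNReal.rpow_lt_top_of_nonneg hd ENNReal.coe_ne_top)
    ((measure_mono Set.inter_subset_right).trans_lt hs_fin)

lemma hausdorffMeasure_pos_of_mem_nhds_of_lipschitzOnWith [(μH[d] : Measure Y).IsOpenPosMeasure]
    (hd : 0 ≤ d) (hf : ∃ K : ℝ≥0, ∃ t ∈ 𝓝 x, LipschitzOnWith K f t)
    (hopen : 𝓝 (f x) ≤ map f (𝓝 x)) {U : Set X} (hU : U ∈ 𝓝 x) : 0 < μH[d] U := by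
  obtain ⟨K, t, ht, hK⟩ := hf
  have himage : 0 < μH[d] (f '' (t ∩ U)) :=
    Measure.measure_pos_of_mem_nhds _ (hopen (image_mem_map (inter_mem ht hU)))
  have hle := (hK.mono Set.inter_subset_left).hausdorffMeasure_image_le (s := t ∩ U) hd
  exact (pos_of_mul_pos_right (himage.trans_le hle) zero_le).trans_le
    (measure_mono Set.inter_subset_right)

end LocallyLipschitz

section Sphere

variable {E : Type*} [NormedAddCommGroup E] [InnerProductSpace ℝ E]

lemma mem_source_stereographic_neg (u : sphere (0 : E) 1) :
    u ∈ (stereographic (norm_eq_of_mem_sphere (-u))).source := by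
  rw [stereographic_source]
  exact ne_neg_of_mem_unit_sphere ℝ u

lemma exists_lipschitzOnWith_stereographic_neg (u : sphere (0 : E) 1) :
    ∃ K : ℝ≥0, ∃ t ∈ 𝓝 u,
      LipschitzOnWith K (stereographic (norm_eq_of_mem_sphere (-u))) t := by
  set v : E := ↑(-u)
  have hopen : IsOpen {x : E | innerSL ℝ v x ≠ (1 : ℝ)} :=
    isOpen_ne_fun (innerSL ℝ v).continuous continuous_const
  have hmem : (u : E) ∈ {x : E | innerSL ℝ v x ≠ (1 : ℝ)} := by
    have hinner : innerSL ℝ v (u : E) = -1 := by simp [v]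
    rw [Set.mem_ofPred_eq, hinner]
    norm_num
  have hsmooth : ContDiffAt ℝ 1 (stereoToFun v) (u : E) :=
    contDiffOn_stereoToFun.contDiffAt (hopen.mem_nhds hmem)
  obtain ⟨K, t, ht, hK⟩ := hsmooth.exists_lipschitzOnWith
  exact ⟨K, Subtype.val ⁻¹' t, continuous_subtype_val.continuousAt.preimage_mem_nhds ht,
    fun x hx y hy ↦ hK hx hy⟩

lemma exists_lipschitzOnWith_stereographic_symm {v : E} (hv : ‖v‖ = 1) (w : (ℝ ∙ v)ᗮ) :
    ∃ K : ℝ≥0, ∃ t ∈ 𝓝 w, LipschitzOnWith K (stereographic hv).symm t := by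
  have hsmooth : ContDiff ℝ 1 fun x : (ℝ ∙ v)ᗮ ↦ stereoInvFunAux v (x : E) :=
    contDiff_stereoInvFunAux.comp (ℝ ∙ v)ᗮ.subtypeL.contDiff
  obtain ⟨K, t, ht, hK⟩ := hsmooth.contDiffAt.exists_lipschitzOnWith
  exact ⟨K, t, ht, fun x hx y hy ↦ hK hx hy⟩

variable [FiniteDimensional ℝ E]

lemma cast_finrank_orthogonal_span_singleton {v : E} (hv : v ≠ 0) :
    (finrank ℝ (ℝ ∙ v)ᗮ : ℝ) = (finrank ℝ E : ℝ) - 1 := by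
  have h := Submodule.finrank_add_finrank_orthogonal (ℝ ∙ v)
  rw [finrank_span_singleton hv] at h
  rw [← h, Nat.cast_add, Nat.cast_one, add_sub_cancel_left]

variable [MeasurableSpace E] [BorelSpace E]

instance isLocallyFiniteMeasure_hausdorffMeasure_sphere :
    IsLocallyFiniteMeasure (μH[(finrank ℝ E : ℝ) - 1] : Measure (sphere (0 : E) 1)) := by
  refine ⟨fun u ↦ ?_⟩
  have hu := mem_source_stereographic_neg u
  set φ := stereographic (norm_eq_of_mem_sphere (-u))
  have hopen : 𝓝 (φ.symm (φ u)) ≤ map φ.symm (𝓝 (φ u)) :=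
    (φ.symm.map_nhds_eq (φ.map_source hu)).ge
  rw [← cast_finrank_orthogonal_span_singleton (ne_zero_of_mem_unit_sphere (-u))]
  have hfinite : (μH[finrank ℝ (ℝ ∙ (↑(-u) : E))ᗮ] : Measure _).FiniteAtFilter (𝓝 (φ u)) :=
    Measure.finiteAt_nhds _ _
  have himage : (μH[finrank ℝ (ℝ ∙ (↑(-u) : E))ᗮ] : Measure (sphere (0 : E) 1)).FiniteAtFilter
      (𝓝 (φ.symm (φ u))) :=
    finiteAtFilter_hausdorffMeasure_of_lipschitzOnWith (Nat.cast_nonneg _)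
      (exists_lipschitzOnWith_stereographic_symm _ (φ u)) hopen hfinite
  rwa [φ.left_inv hu] at himage

instance isOpenPosMeasure_hausdorffMeasure_sphere :
    (μH[(finrank ℝ E : ℝ) - 1] : Measure (sphere (0 : E) 1)).IsOpenPosMeasure := by
  refine ⟨fun U hU ⟨u, hu⟩ ↦ ?_⟩
  rw [← cast_finrank_orthogonal_span_singleton (ne_zero_of_mem_unit_sphere (-u))]
  exact (hausdorffMeasure_pos_of_mem_nhds_of_lipschitzOnWith (Nat.cast_nonneg _)
    (exists_lipschitzOnWith_stereographic_neg u)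
    (OpenPartialHomeomorph.map_nhds_eq _ (mem_source_stereographic_neg u)).ge
    (hU.mem_nhds hu)).ne'

end Sphere

lemma sphereσ_eq_hausdorffMeasure_finrank (n : ℕ) :
    sphereσ n = μH[(finrank ℝ (EuclideanSpace ℝ (Fin n)) : ℝ) - 1] := by
  rw [finrank_euclideanSpace_fin, sphereσ]

instance isFiniteMeasure_sphereσ (n : ℕ) : IsFiniteMeasure (sphereσ n) := by
  rw [sphereσ_eq_hausdorffMeasure_finrank]
  exact CompactSpace.isFiniteMeasure

instance isOpenPosMeasure_sphereσ (n : ℕ) : (sphereσ n).IsOpenPosMeasure := by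
  rw [sphereσ_eq_hausdorffMeasure_finrank]
  infer_instance

/-- The `L_p`-dual Brunn–Minkowski inequality for the `L_p` harmonic radial sum:
`V(K ⊕ₚ L)^{-p/n} ≥ V(K)^{-p/n} + V(L)^{-p/n}`, with equality iff `K, L` are dilates. -/
theorem Lp_dual_brunn_minkowski
    (n : ℕ) (hn : 0 < n) (p : ℝ) (hp : 1 ≤ p)
    (ρK ρL ρS : sphere (0 : EuclideanSpace ℝ (Fin n)) 1 → ℝ)
    (hKc : Continuous ρK) (hLc : Continuous ρL) (hSc : Continuous ρS)
    (hKpos : ∀ u, 0 < ρK u) (hLpos : ∀ u, 0 < ρL u) (hSpos : ∀ u, 0 < ρS u)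
    (hsum : ∀ u, (ρS u) ^ (-p) = (ρK u) ^ (-p) + (ρL u) ^ (-p))
    (VK VL VS : ℝ)
    (hVK : VK = (1 / n) * ∫ u, (ρK u) ^ (n : ℕ) ∂(sphereσ n))
    (hVL : VL = (1 / n) * ∫ u, (ρL u) ^ (n : ℕ) ∂(sphereσ n))
    (hVS : VS = (1 / n) * ∫ u, (ρS u) ^ (n : ℕ) ∂(sphereσ n)) :
    VS ^ (-p / n) ≥ VK ^ (-p / n) + VL ^ (-p / n) ∧
      (VS ^ (-p / n) = VK ^ (-p / n) + VL ^ (-p / n) ↔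
        ∃ c : ℝ, 0 < c ∧ ∀ u, ρK u = c * ρL u) := by
  subst hVK hVL hVS
  have : NeZero n := ⟨hn.ne'⟩
  have : Nonempty (sphere (0 : EuclideanSpace ℝ (Fin n)) 1) :=
    (NormedSpace.sphere_nonempty.2 zero_le_one).to_subtype
  simpa only [dualVolume, rpow_natCast] using Lp_dual_brunn_minkowski_general (sphereσ n)
    (one_pos.trans_le hp) (Nat.cast_pos.2 hn) hKc hLc hKpos hLpos hSpos hsum
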